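/- Let E be a finite-dimensional real vector space equipped with two inner products, with associated norms ‖·‖ and ‖·‖′, and suppose A ≥ 1 is a constant such that (1/A)·‖x‖ ≤ ‖x‖′ ≤ A·‖x‖ for all x ∈ E. Then for all linear subspaces F, G of E one has δ′(F, G) ≤ A² · δ(F, G), where δ and δ′ denote the Verdier distances computed with respect to the two inner products respectively. -/

import Mathlib

/-- The Verdier distance between two linear subspaces `F` and `G` of a real inner
product space: `δ(F, G) = sup { dist(x, G) : x ∈ F, ‖x‖ = 1 }` (equal to `0` when
`F = {0}`, since then the set is empty and `sSup ∅ = 0` in `ℝ`). -/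
noncomputable def verdierDist {E : Type*} [NormedAddCommGroup E] [InnerProductSpace ℝ E]
    (F G : Submodule ℝ E) : ℝ :=
  sSup ((fun x => Metric.infDist x (G : Set E)) '' {x : E | x ∈ F ∧ ‖x‖ = 1})

/-! `δ(F, G)` is the operator norm of the composite `F → E → E ⧸ G`, so it is the least constant
`c ≥ 0` with `dist(x, G) ≤ c ‖x‖` on `F`. A change of norm multiplies `dist(x, G)` by at most `A`
and `‖x‖` by at least `1 / A`, so this constant grows by a factor of at most `A²`. -/

open scoped NNReal

theorem norm_quotient_mk_eq_infDist {R M : Type*} [Ring R] [SeminormedAddCommGroup M]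
    [Module R M] (S : Submodule R M) (x : M) :
    ‖(Submodule.Quotient.mk x : M ⧸ S)‖ = Metric.infDist x S :=
  QuotientAddGroup.norm_mk (S := S.toAddSubgroup) x

theorem infDist_image_le_of_lipschitzWith {X Y : Type*} [PseudoMetricSpace X]
    [PseudoMetricSpace Y] {K : ℝ≥0} {f : X → Y} (hf : LipschitzWith K f) (x : X) (s : Set X) :
    Metric.infDist (f x) (f '' s) ≤ K * Metric.infDist x s := by
  rcases s.eq_empty_or_nonempty with rfl | hs
  · simp
  have : Nonempty s := hs.to_subtype
  rw [Metric.infDist_eq_iInf (s := s), Real.mul_iInf_of_nonneg K.coe_nonneg]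
  exact le_ciInf fun y => (Metric.infDist_le_dist_of_mem (Set.mem_image_of_mem f y.2)).trans
    (hf.dist_le_mul x y)

section VerdierDist

variable {E : Type*} [NormedAddCommGroup E] [InnerProductSpace ℝ E] (F G : Submodule ℝ E)

theorem verdierDist_eq_norm_mkQL_comp_subtypeL :
    verdierDist F G = ‖G.mkQL ∘L F.subtypeL‖ := by
  rw [← ContinuousLinearMap.sSup_sphere_eq_norm, verdierDist]
  congr 1
  ext r
  simp [norm_quotient_mk_eq_infDist, and_left_comm, and_assoc]

theorem verdierDist_nonneg : 0 ≤ verdierDist F G := by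
  rw [verdierDist_eq_norm_mkQL_comp_subtypeL]
  exact (G.mkQL ∘L F.subtypeL).opNorm_nonneg

variable {F}

theorem infDist_le_verdierDist_mul_norm {x : E} (hx : x ∈ F) :
    Metric.infDist x G ≤ verdierDist F G * ‖x‖ := by
  rw [verdierDist_eq_norm_mkQL_comp_subtypeL]
  exact (norm_quotient_mk_eq_infDist G x).ge.trans
    ((G.mkQL ∘L F.subtypeL).le_opNorm ⟨x, hx⟩)

variable {G}

theorem verdierDist_le {c : ℝ} (hc : 0 ≤ c) (h : ∀ x ∈ F, Metric.infDist x G ≤ c * ‖x‖) :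
    verdierDist F G ≤ c := by
  rw [verdierDist_eq_norm_mkQL_comp_subtypeL]
  exact (G.mkQL ∘L F.subtypeL).opNorm_le_bound hc fun x =>
    (norm_quotient_mk_eq_infDist G (x : E)).le.trans (h x x.2)

end VerdierDist

theorem verdierDist_le_of_norm_equiv_general
    {E E' : Type*} [NormedAddCommGroup E] [InnerProductSpace ℝ E]
    [NormedAddCommGroup E'] [InnerProductSpace ℝ E']
    (f : E →ₗ[ℝ] E') {K L : ℝ≥0} (hK : AntilipschitzWith K f) (hL : LipschitzWith L f)
    (F G : Submodule ℝ E) :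
    verdierDist (F.map f) (G.map f) ≤ L * K * verdierDist F G := by
  have hδ : 0 ≤ verdierDist F G := verdierDist_nonneg F G
  refine verdierDist_le (by positivity) ?_
  rintro _ ⟨x, hx, rfl⟩
  calc Metric.infDist (f x) (f '' G)
      ≤ L * Metric.infDist x G := infDist_image_le_of_lipschitzWith hL x G
    _ ≤ L * (verdierDist F G * ‖x‖) := by gcongr; exact infDist_le_verdierDist_mul_norm G hx
    _ ≤ L * (verdierDist F G * (K * ‖f x‖)) := by
        gcongr
        exact hK.le_mul_norm (map_zero f) x
    _ = L * K * verdierDist F G * ‖f x‖ := by ring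

/-- A vector space equipped with two inner products is encoded as a linear
equivalence `e : E ≃ₗ[ℝ] E'` between two inner product spaces (the identity map
of the underlying vector space).  If `(1/A)·‖x‖ ≤ ‖x‖′ ≤ A·‖x‖` for all `x`
(with `A ≥ 1`), then the Verdier distances with respect to the two inner
products satisfy `δ′(F, G) ≤ A² · δ(F, G)` for all subspaces `F`, `G`. -/
theorem verdierDist_le_of_norm_equiv
    {E E' : Type*} [NormedAddCommGroup E] [InnerProductSpace ℝ E] [FiniteDimensional ℝ E]
    [NormedAddCommGroup E'] [InnerProductSpace ℝ E'] [FiniteDimensional ℝ E']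
    (e : E ≃ₗ[ℝ] E') (A : ℝ) (hA : 1 ≤ A)
    (h₁ : ∀ x : E, ‖x‖ / A ≤ ‖e x‖) (h₂ : ∀ x : E, ‖e x‖ ≤ A * ‖x‖) :
    ∀ F G : Submodule ℝ E,
      verdierDist (F.map (e : E →ₗ[ℝ] E')) (G.map (e : E →ₗ[ℝ] E'))
        ≤ A ^ 2 * verdierDist F G := by
  lift A to ℝ≥0 using zero_le_one.trans hA
  have hA₀ : (0 : ℝ) < A := zero_lt_one.trans_le hA
  have hK : AntilipschitzWith A e :=
    AddMonoidHomClass.antilipschitz_of_bound e fun x => (div_le_iff₀' hA₀).mp (h₁ x)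
  have hL : LipschitzWith A e := AddMonoidHomClass.lipschitz_of_bound_nnnorm e A h₂
  simpa only [sq] using verdierDist_le_of_norm_equiv_general (e : E →ₗ[ℝ] E') hK hL
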